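/- arXiv:1504.03609 — 2 statements merged into one kernel-verified Lean document; each statement's English description precedes it below -/
import Mathlib

section
/- Let N, M, n be positive integers, let B ∈ ℝ^{N×M} satisfy 1_Nᵀ B = 0, and for each i ∈ {1,…,N} let J_i ∈ ℝ^{n×n} be skew-symmetric and R_i ∈ ℝ^{n×n} symmetric positive definite. Suppose y* ∈ ℝ^n, μ ∈ ℝ^{nM} and d_1,…,d_N ∈ ℝ^n satisfy 0 = (J_i − R_i)y* − (B_i ⊗ I_n)μ + d_i for every i, where B_i denotes the i-th row of B. Then Σ_{i=1}^N (J_i − R_i) is invertible and y* = −(Σ_{i=1}^N (J_i − R_i))^{-1} Σ_{i=1}^N d_i. -/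
open Matrix

/-! Summing the `N` equilibrium equations eliminates the coupling term, since `1ᵀB = 0`, and leaves
`(∑ (Jᵢ - Rᵢ)) y* = -∑ dᵢ`. The matrix `∑ (Rᵢ - Jᵢ)` has positive definite Hermitian part `∑ Rᵢ`,
and such a matrix `A` is invertible: if `A x = 0`, then `x* (A + Aᴴ) x = 0`, so `x = 0`. -/

section Invertibility

variable {m K : Type*} [Fintype m] [DecidableEq m] [Field K] [PartialOrder K] [StarRing K]

theorem isUnit_of_posDef_add_conjTranspose {A : Matrix m m K} (hA : (A + Aᴴ).PosDef) :
    IsUnit A := by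
  rw [← mulVec_injective_iff_isUnit, ← coe_mulVecLin, injective_iff_map_eq_zero]
  intro x hx
  rw [mulVecLin_apply] at hx
  by_contra hx₀
  have hx' : star x ᵥ* Aᴴ = 0 := by rw [← star_mulVec, hx, star_zero]
  have hform : star x ⬝ᵥ ((A + Aᴴ) *ᵥ x) = 0 := by
    rw [add_mulVec, dotProduct_add, hx, dotProduct_mulVec _ Aᴴ, hx', dotProduct_zero,
      zero_dotProduct, add_zero]
  exact (hA.dotProduct_mulVec_pos hx₀).ne' hform

theorem isUnit_sub_of_mem_skewAdjoint_of_posDef [AddLeftMono K] {J R : Matrix m m K}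
    (hJ : J ∈ skewAdjoint (Matrix m m K)) (hR : R.PosDef) : IsUnit (J - R) := by
  have hJ' : Jᴴ = -J := skewAdjoint.mem_iff.mp hJ
  have hpart : (R - J) + (R - J)ᴴ = R + R := by
    rw [conjTranspose_sub, hR.isHermitian.eq, hJ']
    abel
  rw [← neg_sub, IsUnit.neg_iff]
  exact isUnit_of_posDef_add_conjTranspose (hpart ▸ hR.add hR)

end Invertibility

section AggregateEquation

variable {ι κ m n α : Type*} [Fintype ι]

theorem sum_row_mul_eq_zero [Fintype κ] [Semiring α] {B : Matrix ι κ α}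
    (hB : ∀ k, ∑ i, B i k = 0) (U : Matrix κ m α) : ∑ i, (B * U) i = 0 := by
  have hB' : (1 : ι → α) ᵥ* B = 0 := by
    ext k
    simp only [vecMul, one_dotProduct, hB, Pi.zero_apply]
  rw [← one_vecMul, ← vecMul_vecMul, hB', zero_vecMul]

theorem sum_mulVec_eq_neg_sum [Fintype n] [Ring α] {A : ι → Matrix m n α} {y : n → α}
    {c d : ι → m → α} (hc : ∑ i, c i = 0) (h : ∀ i, 0 = A i *ᵥ y - c i + d i) :
    (∑ i, A i) *ᵥ y = -∑ i, d i := by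
  have hA : ∀ i, A i *ᵥ y = c i - d i := fun i => by
    rw [← sub_eq_zero, sub_sub_eq_add_sub, add_sub_right_comm, ← h i]
  simp only [sum_mulVec, hA, Finset.sum_sub_distrib, hc, zero_sub]

end AggregateEquation

theorem eq_inv_mulVec_of_mulVec_eq {m α : Type*} [Fintype m] [DecidableEq m] [CommRing α]
    {A : Matrix m m α} (hA : IsUnit A) {x b : m → α} (h : A *ᵥ x = b) : x = A⁻¹ *ᵥ b := by
  let _ := hA.invertible
  exact (inv_mulVec_eq_vec h.symm).symm

theorem equilibrium_output_value_general {ι κ m K : Type*} [Fintype ι] [Fintype κ] [Fintype m]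
    [DecidableEq m] [Field K] [PartialOrder K] [StarRing K] [AddLeftMono K]
    (B : Matrix ι κ K) (hB : ∀ k, ∑ i, B i k = 0) (J R : ι → Matrix m m K)
    (hJ : ∑ i, J i ∈ skewAdjoint (Matrix m m K)) (hR : (∑ i, R i).PosDef)
    (ystar : m → K) (μ : κ × m → K) (d : ι → m → K)
    (heq : ∀ i, 0 = (J i - R i) *ᵥ ystar - (fun j => ∑ k, B i k * μ (k, j)) + d i) :
    IsUnit (∑ i, (J i - R i)) ∧ ystar = -((∑ i, (J i - R i))⁻¹ *ᵥ ∑ i, d i) := by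
  have hunit : IsUnit (∑ i, (J i - R i)) := by
    rw [Finset.sum_sub_distrib]
    exact isUnit_sub_of_mem_skewAdjoint_of_posDef hJ hR
  -- `(Bᵢ ⊗ I) μ` is the `i`-th row of `B * U`, where `U` is `μ` reshaped into a matrix.
  have hcoupling : ∑ i, (fun j => ∑ k, B i k * μ (k, j)) = 0 :=
    sum_row_mul_eq_zero hB (of fun k j => μ (k, j))
  refine ⟨hunit, ?_⟩
  rw [← mulVec_neg]
  exact eq_inv_mulVec_of_mulVec_eq hunit (sum_mulVec_eq_neg_sum hcoupling heq)

/-- if `1ᵀB = 0`, each `J_i` is skew-symmetric, each `R_i`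
symmetric positive definite, and `0 = (J_i − R_i)y* − (B_i ⊗ I_n)μ + d_i`
for every `i`, then `Σ(J_i − R_i)` is invertible and
`y* = −(Σ(J_i − R_i))⁻¹ Σ d_i`. -/
theorem equilibrium_output_value {n N M : ℕ}
    (hn : 0 < n) (hN : 0 < N) (hM : 0 < M)
    (B : Matrix (Fin N) (Fin M) ℝ)
    (hB : ∀ k, ∑ i, B i k = 0)
    (J R : Fin N → Matrix (Fin n) (Fin n) ℝ)
    (hJ : ∀ i, (J i)ᵀ = -(J i)) (hR : ∀ i, (R i).PosDef)
    (ystar : Fin n → ℝ) (μ : Fin M × Fin n → ℝ) (d : Fin N → Fin n → ℝ)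
    (heq : ∀ i, (0 : Fin n → ℝ) =
      (J i - R i) *ᵥ ystar - (fun j => ∑ k, B i k * μ (k, j)) + d i) :
    IsUnit (∑ i, (J i - R i)) ∧
    ystar = -((∑ i, (J i - R i))⁻¹ *ᵥ (∑ i, d i)) := by
  have hJsum : ∑ i, J i ∈ skewAdjoint (Matrix (Fin n) (Fin n) ℝ) :=
    sum_mem fun i _ => (conjTranspose_eq_transpose_of_trivial (J i)).trans (hJ i)
  have hRsum : (∑ i, R i).PosDef := posDef_sum ⟨⟨0, hN⟩, Finset.mem_univ _⟩ fun i _ => hR i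
  exact equilibrium_output_value_general B hB J R hJsum hRsum ystar μ d heq
end

section
/- Theorem 1 (output agreement by attractivity of equilibria). Suppose (x̄, η̄) ∈ (Ω_n)^N × (Ω_e)^M is an equilibrium of the network. Then there exists an open set U of initial conditions containing (x̄, η̄) such that every solution (x, η) of the network with (x(0), η(0)) ∈ U is defined for all t ≥ 0, remains in (Ω_n)^N × (Ω_e)^M, and converges as t → ∞ to some equilibrium (x̃, η̃) of the network; consequently output agreement is achieved in the limit: G_iᵀ∇H_{n,i}(x̃_i) = G_jᵀ∇H_{n,j}(x̃_j) for all nodes i, j. -/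
open Matrix Filter Topology Set

/-- The gradient of `H : ℝ^p → ℝ` in coordinates: `(∇H(x))_j = DH(x)[e_j]`. -/
noncomputable def grad {p : ℕ} (H : (Fin p → ℝ) → ℝ) (x : Fin p → ℝ) : Fin p → ℝ :=
  fun j => fderiv ℝ H x (Pi.single j 1)

/-!
The total Bregman divergence from an equilibrium, summed over the edges and the dynamic nodes, is a
Lyapunov function whose derivative along solutions is minus the dissipation. It is positive definite
on the constraint manifold because there the edge efforts determine the efforts of the algebraic
nodes, so the equilibrium is stable and nearby solutions stay in a compact part of the domain. By
Barbalat's lemma the dissipation tends to `0`, hence `x` converges to `x̄`, and a second application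
to `x` itself shows that every cluster point of the solution is again an equilibrium. As this
equilibrium is also stable, the solution converges to it.
-/

section Bregman

variable {E : Type*} [NormedAddCommGroup E] [NormedSpace ℝ E] {H : E → ℝ} {Ω : Set E} {a y : E}

/-- The Bregman divergence of `H`: the height of the graph of `H` at `y` above its tangent plane
at `a`. It is the building block of the Lyapunov function. -/
noncomputable def bregman (H : E → ℝ) (a y : E) : ℝ := H y - H a - fderiv ℝ H a (y - a)

theorem bregman_self (H : E → ℝ) (a : E) : bregman H a a = 0 := by simp [bregman]

theorem bregman_nonneg (hH : ConvexOn ℝ Ω H) (ha : a ∈ Ω) (hy : y ∈ Ω)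
    (hd : DifferentiableAt ℝ H a) : 0 ≤ bregman H a y := by
  have hline : HasDerivAt (H ∘ AffineMap.lineMap a y) (fderiv ℝ H a (y - a)) (0 : ℝ) := by
    refine HasFDerivAt.comp_hasDerivAt 0 ?_ AffineMap.hasDerivAt_lineMap
    simpa only [AffineMap.lineMap_apply_zero] using hd.hasFDerivAt
  have hslope := (hH.comp_affineMap (AffineMap.lineMap a y)).le_slope_of_hasDerivAt
    (by simpa using ha) (by simpa using hy) one_pos hline
  have hle : fderiv ℝ H a (y - a) ≤ H y - H a := by simpa [slope_def_field] using hslope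
  exact sub_nonneg.2 hle

theorem bregman_pos (hH : StrictConvexOn ℝ Ω H) (ha : a ∈ Ω) (hy : y ∈ Ω)
    (hd : DifferentiableAt ℝ H a) (hne : y ≠ a) : 0 < bregman H a y := by
  have hmid := bregman_nonneg hH.convexOn ha (hH.1.midpoint_mem ha hy) hd
  have hlt := hH.2 ha hy hne.symm (half_pos one_pos) (half_pos one_pos) (add_halves (1 : ℝ))
  have hsub : midpoint ℝ a y - a = (1 / 2 : ℝ) • (y - a) := by simp [midpoint_sub_left]
  have hmidpoint : (1 / 2 : ℝ) • a + (1 / 2 : ℝ) • y = midpoint ℝ a y := by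
    rw [midpoint_eq_smul_add, smul_add, invOf_eq_inv, one_div]
  rw [hmidpoint] at hlt
  rw [bregman, hsub, map_smul] at hmid
  rw [bregman]
  simp only [smul_eq_mul] at hmid hlt
  linarith

theorem bregman_add_bregman_swap (H : E → ℝ) (a y : E) :
    bregman H a y + bregman H y a = (fderiv ℝ H y - fderiv ℝ H a) (y - a) := by
  have hswap : fderiv ℝ H y (a - y) = -fderiv ℝ H y (y - a) := by rw [← map_neg, neg_sub]
  rw [bregman, bregman, hswap, _root_.sub_apply]
  ring

theorem injOn_fderiv_of_strictConvexOn (hH : StrictConvexOn ℝ Ω H)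
    (hd : ∀ a ∈ Ω, DifferentiableAt ℝ H a) : InjOn (fderiv ℝ H) Ω := by
  intro a ha y hy heq
  by_contra hne
  have hay := bregman_pos hH ha hy (hd a ha) (Ne.symm hne)
  have hya := bregman_pos hH hy ha (hd y hy) hne
  have hsum := bregman_add_bregman_swap H a y
  rw [heq, sub_self, _root_.zero_apply] at hsum
  linarith

theorem continuousOn_bregman (hH : ContinuousOn H Ω) (a : E) : ContinuousOn (bregman H a) Ω := by
  unfold bregman
  fun_prop

theorem hasDerivWithinAt_bregman (a : E) {y : ℝ → E} {y' : E} {s : Set ℝ} {t : ℝ}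
    (hd : DifferentiableAt ℝ H (y t)) (hy : HasDerivWithinAt y y' s t) :
    HasDerivWithinAt (fun τ => bregman H a (y τ)) ((fderiv ℝ H (y t) - fderiv ℝ H a) y') s t :=
  ((hd.hasFDerivAt.comp_hasDerivWithinAt t hy).sub_const (H a)).sub
    ((fderiv ℝ H a).hasFDerivAt.comp_hasDerivWithinAt t (hy.sub_const a))

end Bregman

section Gradient

variable {p : ℕ} {H : (Fin p → ℝ) → ℝ} {Ω : Set (Fin p → ℝ)}

theorem fderiv_apply_eq_grad_dotProduct (H : (Fin p → ℝ) → ℝ) (a v : Fin p → ℝ) :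
    fderiv ℝ H a v = grad H a ⬝ᵥ v := by
  conv_lhs => rw [pi_eq_sum_univ' v]
  simp only [map_sum, map_smul, smul_eq_mul, dotProduct, grad, mul_comm]

theorem injOn_grad_of_strictConvexOn (hH : StrictConvexOn ℝ Ω H)
    (hd : ∀ a ∈ Ω, DifferentiableAt ℝ H a) : InjOn (grad H) Ω := by
  refine fun a ha y hy heq => injOn_fderiv_of_strictConvexOn hH hd ha hy ?_
  ext1 v
  rw [fderiv_apply_eq_grad_dotProduct, fderiv_apply_eq_grad_dotProduct, heq]

theorem continuousOn_grad (hΩ : IsOpen Ω) (hH : ContDiffOn ℝ 1 H Ω) :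
    ContinuousOn (grad H) Ω :=
  continuousOn_pi.2 fun _ =>
    (hH.continuousOn_fderiv_of_isOpen hΩ le_rfl).clm_apply continuousOn_const

end Gradient

section Asymptotics

theorem uniformContinuousOn_pi {α ι : Type*} {β : ι → Type*} [UniformSpace α]
    [∀ i, UniformSpace (β i)] {f : α → ∀ i, β i} {s : Set α} :
    UniformContinuousOn f s ↔ ∀ i, UniformContinuousOn (fun a => f a i) s := by
  simp only [uniformContinuousOn_iff_restrict, uniformContinuous_pi]
  rfl

theorem uniformContinuousOn_comp_of_isCompact {α β γ : Type*} [UniformSpace α] [UniformSpace β]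
    [UniformSpace γ] {f : α → β} {g : β → γ} {s : Set α} {K : Set β} (hK : IsCompact K)
    (hg : ContinuousOn g K) (hf : UniformContinuousOn f s) (hfK : MapsTo f s K) :
    UniformContinuousOn (fun a => g (f a)) s :=
  (hK.uniformContinuousOn_of_continuous hg).comp hf hfK

variable {E : Type*} [NormedAddCommGroup E] [NormedSpace ℝ E] {f f' : ℝ → E}

theorem uniformContinuousOn_of_norm_hasDerivWithinAt_le {s : Set ℝ} (hs : Convex ℝ s)
    (hd : ∀ t ∈ s, HasDerivWithinAt f (f' t) s t) {C : ℝ} (hC : ∀ t ∈ s, ‖f' t‖ ≤ C) :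
    UniformContinuousOn f s :=
  (hs.lipschitzOnWith_of_nnnorm_hasDerivWithin_le (C := C.toNNReal) hd fun t ht =>
    NNReal.coe_le_coe.1 ((hC t ht).trans (Real.le_coe_toNNReal C))).uniformContinuousOn

/-- Barbalat's lemma. -/
theorem tendsto_zero_of_hasDerivWithinAt_of_uniformContinuousOn {a : ℝ} {l : E}
    (hd : ∀ t ∈ Ici a, HasDerivWithinAt f (f' t) (Ici a) t)
    (huc : UniformContinuousOn f' (Ici a)) (hl : Tendsto f atTop (𝓝 l)) :
    Tendsto f' atTop (𝓝 0) := by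
  refine Metric.tendsto_nhds.2 fun ε hε => ?_
  obtain ⟨δ, hδ, hclose⟩ := Metric.uniformContinuousOn_iff.1 huc (ε / 2) (half_pos hε)
  obtain ⟨h, hh, hhδ⟩ := exists_between hδ
  have hincr : Tendsto (fun t => f (t + h) - f t) atTop (𝓝 0) := by
    simpa using (hl.comp (tendsto_atTop_add_const_right _ h tendsto_id)).sub hl
  filter_upwards [eventually_ge_atTop a,
    Metric.tendsto_nhds.1 hincr (ε / 2 * h) (by positivity)] with t hat hsmall
  have hIcc : Icc t (t + h) ⊆ Ici a := fun s hs => hat.trans hs.1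
  have hmvt : ‖(f (t + h) - (t + h) • f' t) - (f t - t • f' t)‖ ≤ ε / 2 * ‖t + h - t‖ := by
    refine (convex_Icc t (t + h)).norm_image_sub_le_of_norm_hasDerivWithin_le
      (f := fun s => f s - s • f' t) (f' := fun s => f' s - f' t) (fun s hs => ?_) (fun s hs => ?_)
      (left_mem_Icc.2 (by linarith)) (right_mem_Icc.2 (by linarith))
    · simpa using ((hd s (hIcc hs)).mono hIcc).fun_sub
        ((hasDerivWithinAt_id s (Icc t (t + h))).smul_const (f' t))
    · rw [← dist_eq_norm]
      refine (hclose s (hIcc hs) t hat ?_).le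
      rw [Real.dist_eq, abs_lt]
      constructor <;> linarith [hs.1, hs.2]
  have hsplit : h • f' t =
      (f (t + h) - f t) - ((f (t + h) - (t + h) • f' t) - (f t - t • f' t)) := by
    rw [add_smul]; abel
  have hlt : h * ‖f' t‖ < h * ε := calc
    h * ‖f' t‖ = ‖h • f' t‖ := by rw [norm_smul, Real.norm_of_nonneg hh.le]
    _ ≤ ‖f (t + h) - f t‖ + ‖(f (t + h) - (t + h) • f' t) - (f t - t • f' t)‖ := by
      rw [hsplit]; exact norm_sub_le _ _
    _ < ε / 2 * h + ε / 2 * h := by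
      rw [add_sub_cancel_left, Real.norm_of_nonneg hh.le] at hmvt
      rw [dist_zero_right] at hsmall
      exact add_lt_add_of_lt_of_le hsmall hmvt
    _ = h * ε := by ring
  simpa using lt_of_mul_lt_mul_left hlt hh.le

theorem exists_tendsto_atTop_of_antitoneOn_Ici {g : ℝ → ℝ} {a : ℝ} (hg : AntitoneOn g (Ici a))
    (hbdd : ∃ c, ∀ t ∈ Ici a, c ≤ g t) : ∃ l, Tendsto g atTop (𝓝 l) := by
  obtain ⟨c, hc⟩ := hbdd
  have hanti : Antitone fun t => g (max t a) := fun s t hst =>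
    hg (le_max_right s a) (le_max_right t a) (max_le_max_right a hst)
  have hlim := tendsto_atTop_ciInf hanti ⟨c, forall_mem_range.2 fun t => hc _ (le_max_right t a)⟩
  refine ⟨_, hlim.congr' ?_⟩
  filter_upwards [eventually_ge_atTop a] with t ht
  rw [max_eq_left ht]

theorem tendsto_nhds_of_tendsto_comp_of_isCompact {α X Y : Type*} [TopologicalSpace X]
    [TopologicalSpace Y] [T2Space Y] {l : Filter α} {u : α → X} {g : X → Y} {K : Set X} {x : X}
    {y : Y} (hK : IsCompact K) (hu : ∀ᶠ t in l, u t ∈ K) (hg : ContinuousOn g K)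
    (hgu : Tendsto (fun t => g (u t)) l (𝓝 y)) (hunique : ∀ w ∈ K, g w = y → w = x) :
    Tendsto u l (𝓝 x) := by
  refine hK.tendsto_nhds_of_unique_mapClusterPt hu fun w hw hcluster => hunique w hw ?_
  obtain ⟨𝒰, h𝒰, huw⟩ := mapClusterPt_iff_ultrafilter.1 hcluster
  have huwK : Tendsto u 𝒰 (𝓝[K] w) := tendsto_nhdsWithin_iff.2 ⟨huw, h𝒰 hu⟩
  exact tendsto_nhds_unique ((hg w hw).tendsto.comp huwK) (hgu.mono_left h𝒰)

end Asymptotics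

section Trapping

theorem exists_first_hitting_time {g : ℝ → ℝ} {a b r : ℝ} (hg : ContinuousOn g (Icc a b))
    (hab : a ≤ b) (ha : g a ≤ r) (hb : r ≤ g b) :
    ∃ T ∈ Icc a b, g T = r ∧ ∀ s ∈ Icc a T, g s ≤ r := by
  have hcompact : IsCompact (Icc a b ∩ g ⁻¹' {r}) :=
    isCompact_Icc.of_isClosed_subset (hg.preimage_isClosed_of_isClosed isClosed_Icc
      isClosed_singleton) inter_subset_left
  obtain ⟨c, hc, hcr⟩ := intermediate_value_Icc hab hg ⟨ha, hb⟩
  obtain ⟨T, ⟨hT, hTr⟩, hleast⟩ := hcompact.exists_isLeast ⟨c, hc, hcr⟩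
  refine ⟨T, hT, hTr, fun s hs => ?_⟩
  by_contra! hlt
  obtain ⟨s', hs', hs'r⟩ := intermediate_value_Icc hs.1
    (hg.mono (Icc_subset_Icc_right (hs.2.trans hT.2))) ⟨ha, hlt.le⟩
  have hTs : T ≤ s' := hleast ⟨⟨hs'.1, hs'.2.trans (hs.2.trans hT.2)⟩, hs'r⟩
  rw [le_antisymm hs.2 (hTs.trans hs'.2), hTr] at hlt
  exact lt_irrefl r hlt

/-- To leave the ball, the curve would have to climb to the minimum of `V` over `sphere c r ∩ C`;
`U` is the part of the ball where `V` is below it. -/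
theorem exists_nhds_forall_mem_ball_of_lyapunov {Z : Type*} [PseudoMetricSpace Z] [ProperSpace Z]
    {V : Z → ℝ} {C : Set Z} {c : Z} {r : ℝ} (hr : 0 < r)
    (hV : ContinuousOn V (Metric.closedBall c r)) (hC : IsClosed (Metric.sphere c r ∩ C))
    (hpos : ∀ w ∈ Metric.sphere c r ∩ C, V c < V w) :
    ∃ U ∈ 𝓝 c, ∀ (z : ℝ → Z) (t₀ : ℝ), ContinuousOn z (Ici t₀) → MapsTo z (Ici t₀) C →
      (∀ T ≥ t₀, MapsTo z (Icc t₀ T) (Metric.closedBall c r) → V (z T) ≤ V (z t₀)) →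
      z t₀ ∈ U → ∀ t ≥ t₀, z t ∈ Metric.ball c r := by
  have hcompact : IsCompact (Metric.sphere c r ∩ C) :=
    (isCompact_sphere c r).of_isClosed_subset hC inter_subset_left
  obtain ⟨v, hcv, hv⟩ := hcompact.exists_forall_le'
    (hV.mono (inter_subset_left.trans Metric.sphere_subset_closedBall)) hpos
  have hVc : ContinuousAt V c := hV.continuousAt (Metric.closedBall_mem_nhds c hr)
  refine ⟨{w | V w < v} ∩ Metric.ball c r,
    inter_mem (hVc.eventually_lt_const hcv) (Metric.ball_mem_nhds c hr), ?_⟩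
  rintro z t₀ hz hzC hdecr ⟨hz₀v, hz₀r⟩ t ht
  by_contra hout
  have hdist : ContinuousOn (fun s => dist (z s) c) (Ici t₀) := by fun_prop
  obtain ⟨T, hT, hTr, hbefore⟩ := exists_first_hitting_time (hdist.mono Icc_subset_Ici_self) ht
    (Metric.mem_ball.1 hz₀r).le (not_lt.1 hout)
  exact absurd (hv (z T) ⟨hTr, hzC hT.1⟩)
    (not_le.2 ((hdecr T hT.1 hbefore).trans_lt hz₀v))

end Trapping

section Matrix

theorem dotProduct_mulVec_self_eq_zero_of_transpose_eq_neg {ι : Type*} [Fintype ι]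
    {J : Matrix ι ι ℝ} (hJ : Jᵀ = -J) (v : ι → ℝ) : v ⬝ᵥ (J *ᵥ v) = 0 := by
  have hneg : v ⬝ᵥ (J *ᵥ v) = -(v ⬝ᵥ (J *ᵥ v)) := calc
    v ⬝ᵥ (J *ᵥ v) = (Jᵀ *ᵥ v) ⬝ᵥ v := by rw [dotProduct_mulVec, mulVec_transpose]
    _ = -(v ⬝ᵥ (J *ᵥ v)) := by rw [hJ, neg_mulVec, neg_dotProduct, dotProduct_comm]
  linarith

theorem dotProduct_sub_mulVec_self_neg {ι : Type*} [Fintype ι] {J R : Matrix ι ι ℝ}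
    (hJ : Jᵀ = -J) (hR : R.PosDef) {v : ι → ℝ} (hv : v ≠ 0) : v ⬝ᵥ ((J - R) *ᵥ v) < 0 := by
  have hRv : 0 < v ⬝ᵥ (R *ᵥ v) := by simpa only [star_trivial] using hR.dotProduct_mulVec_pos hv
  rw [sub_mulVec, dotProduct_sub, dotProduct_mulVec_self_eq_zero_of_transpose_eq_neg hJ]
  linarith

theorem isUnit_of_dotProduct_mulVec_self_neg {ι : Type*} [Fintype ι] [DecidableEq ι]
    {A : Matrix ι ι ℝ} (hA : ∀ v ≠ 0, v ⬝ᵥ (A *ᵥ v) < 0) : IsUnit A := by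
  refine mulVec_injective_iff_isUnit.1 ((injective_iff_map_eq_zero A.mulVecLin).2 fun v hv => ?_)
  by_contra hne
  have hneg := hA v hne
  rw [← mulVecLin_apply, hv, dotProduct_zero] at hneg
  exact lt_irrefl 0 hneg

theorem eq_of_ker_transpose_le_span_one {ι κ μ : Type*} [Fintype ι] {B : Matrix ι κ ℝ}
    (hB : LinearMap.ker Bᵀ.mulVecLin ≤ Submodule.span ℝ {fun _ => 1}) {y : ι → μ → ℝ}
    (hy : ∀ k, ∑ i, B i k • y i = 0) (i j : ι) : y i = y j := by
  funext l
  have hmem : (fun i => y i l) ∈ LinearMap.ker Bᵀ.mulVecLin := by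
    refine LinearMap.mem_ker.2 (funext fun k => ?_)
    have hkl := congrFun (hy k) l
    simp only [Finset.sum_apply, Pi.smul_apply, smul_eq_mul, Pi.zero_apply] at hkl
    exact hkl
  obtain ⟨c, hc⟩ := Submodule.mem_span_singleton.1 (hB hmem)
  exact (congrFun hc i).symm.trans (congrFun hc j)

end Matrix

/-- Joint vectors `(x, η)` of a network with a component in `ℝ^(n i)` for each node `i` and one in
`ℝ^m` for each edge. They serve for states as well as for the gradients of the Hamiltonians. -/
abbrev NetworkState {ι : Type*} (κ : Type*) (n : ι → ℕ) (m : ℕ) :=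
  (∀ i, Fin (n i) → ℝ) × (κ → Fin m → ℝ)

/-- A network of port-Hamiltonian nodes `ι` coupled along edges `κ`. The matrix `A i` plays the role
of `J_i - R_i`; nodes in `dynamic` obey a differential equation, the others the corresponding
algebraic constraint. -/
structure PHNetwork (ι κ : Type*) (n : ι → ℕ) (m : ℕ) where
  B : Matrix ι κ ℝ
  A : ∀ i, Matrix (Fin (n i)) (Fin (n i)) ℝ
  A_neg : ∀ i, ∀ v ≠ 0, v ⬝ᵥ (A i *ᵥ v) < 0
  G : ∀ i, Matrix (Fin (n i)) (Fin m) ℝ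
  d : ι → Fin m → ℝ
  Ωn : ∀ i, Set (Fin (n i) → ℝ)
  isOpen_Ωn : ∀ i, IsOpen (Ωn i)
  Ωe : κ → Set (Fin m → ℝ)
  isOpen_Ωe : ∀ k, IsOpen (Ωe k)
  Hn : ∀ i, (Fin (n i) → ℝ) → ℝ
  contDiffOn_Hn : ∀ i, ContDiffOn ℝ 1 (Hn i) (Ωn i)
  strictConvexOn_Hn : ∀ i, StrictConvexOn ℝ (Ωn i) (Hn i)
  He : κ → (Fin m → ℝ) → ℝ
  contDiffOn_He : ∀ k, ContDiffOn ℝ 1 (He k) (Ωe k)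
  strictConvexOn_He : ∀ k, StrictConvexOn ℝ (Ωe k) (He k)
  dynamic : Finset ι

namespace PHNetwork

variable {ι κ : Type*} {n : ι → ℕ} {m : ℕ}

section Definitions

variable (S : PHNetwork ι κ n m)

/-- The admissible states `(Ω_n)^N × (Ω_e)^M`. -/
def domain : Set (NetworkState κ n m) := {z | (∀ i, z.1 i ∈ S.Ωn i) ∧ ∀ k, z.2 k ∈ S.Ωe k}

/-- The efforts (co-energy variables) of a state, that is, the gradients of the Hamiltonians. -/
noncomputable def effort (z : NetworkState κ n m) : NetworkState κ n m :=
  (fun i => grad (S.Hn i) (z.1 i), fun k => grad (S.He k) (z.2 k))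

/-- The right-hand side of the edge dynamics as a function of the efforts. -/
def edgeField [Fintype ι] (e : NetworkState κ n m) (k : κ) : Fin m → ℝ :=
  ∑ i, S.B i k • ((S.G i)ᵀ *ᵥ e.1 i)

/-- The right-hand side of the node dynamics as a function of the efforts. -/
def nodeField [Fintype κ] (e : NetworkState κ n m) (i : ι) : Fin (n i) → ℝ :=
  S.A i *ᵥ e.1 i - S.G i *ᵥ (∑ k, S.B i k • e.2 k) + S.G i *ᵥ S.d i

/-- The states satisfying the algebraic constraints of the non-dynamic nodes. -/
def constraintSet [Fintype κ] : Set (NetworkState κ n m) :=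
  {z | ∀ i ∉ S.dynamic, S.nodeField (S.effort z) i = 0}

/-- Equilibria of the network. -/
structure IsEquilibrium [Fintype ι] [Fintype κ] (z : NetworkState κ n m) : Prop where
  mem_domain : z ∈ S.domain
  edge : ∀ k, S.edgeField (S.effort z) k = 0
  node : ∀ i, S.nodeField (S.effort z) i = 0

/-- Solutions of the network on `[0, ∞)`. They are not required to stay in the domain, outside of
which `grad` may take junk values. -/
structure IsSolution [Fintype ι] [Fintype κ] (z : ℝ → NetworkState κ n m) : Prop where
  continuousOn : ContinuousOn z (Ici 0)
  edge : ∀ t ∈ Ici (0 : ℝ), ∀ k,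
    HasDerivWithinAt (fun s => (z s).2 k) (S.edgeField (S.effort (z t)) k) (Ici 0) t
  node : ∀ t ∈ Ici (0 : ℝ), ∀ i ∈ S.dynamic,
    HasDerivWithinAt (fun s => (z s).1 i) (S.nodeField (S.effort (z t)) i) (Ici 0) t
  constraint : MapsTo z (Ici 0) S.constraintSet

/-- The power dissipated in the nodes at node efforts `v`; for `A i = J_i - R_i` this is
`∑ i, v_iᵀ R_i v_i`. -/
def dissipation [Fintype ι] (v : ∀ i, Fin (n i) → ℝ) : ℝ := -∑ i, v i ⬝ᵥ (S.A i *ᵥ v i)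

/-- The Lyapunov function: the total Bregman divergence from `z₀` to `z` in the edges and in the
dynamic nodes. The algebraic nodes carry no energy term. -/
noncomputable def lyapunov [Fintype κ] (z₀ z : NetworkState κ n m) : ℝ :=
  ∑ i ∈ S.dynamic, bregman (S.Hn i) (z₀.1 i) (z.1 i) + ∑ k, bregman (S.He k) (z₀.2 k) (z.2 k)

end Definitions

variable {S : PHNetwork ι κ n m} {z₀ w : NetworkState κ n m} {z : ℝ → NetworkState κ n m}

section Domain

theorem isOpen_domain [Finite ι] [Finite κ] (S : PHNetwork ι κ n m) : IsOpen S.domain := by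
  simp only [domain, ofPred_and, ofPred_forall]
  exact (isOpen_iInter_of_finite fun i => (S.isOpen_Ωn i).preimage (by fun_prop)).inter
    (isOpen_iInter_of_finite fun k => (S.isOpen_Ωe k).preimage (by fun_prop))

theorem differentiableAt_Hn (hw : w ∈ S.domain) (i : ι) :
    DifferentiableAt ℝ (S.Hn i) (w.1 i) :=
  ((S.contDiffOn_Hn i).differentiableOn one_ne_zero).differentiableAt
    ((S.isOpen_Ωn i).mem_nhds (hw.1 i))

theorem differentiableAt_He (hw : w ∈ S.domain) (k : κ) :
    DifferentiableAt ℝ (S.He k) (w.2 k) :=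
  ((S.contDiffOn_He k).differentiableOn one_ne_zero).differentiableAt
    ((S.isOpen_Ωe k).mem_nhds (hw.2 k))

theorem continuousOn_effort (S : PHNetwork ι κ n m) : ContinuousOn S.effort S.domain :=
  .prodMk
    (continuousOn_pi.2 fun i => (continuousOn_grad (S.isOpen_Ωn i) (S.contDiffOn_Hn i)).comp
      (by fun_prop) fun _ hz => hz.1 i)
    (continuousOn_pi.2 fun k => (continuousOn_grad (S.isOpen_Ωe k) (S.contDiffOn_He k)).comp
      (by fun_prop) fun _ hz => hz.2 k)

theorem node_eq_of_effort_eq (hz₀ : z₀ ∈ S.domain) (hw : w ∈ S.domain) {i : ι}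
    (h : (S.effort w).1 i = (S.effort z₀).1 i) : w.1 i = z₀.1 i :=
  injOn_grad_of_strictConvexOn (S.strictConvexOn_Hn i)
    (fun _ ha => ((S.contDiffOn_Hn i).differentiableOn one_ne_zero).differentiableAt
      ((S.isOpen_Ωn i).mem_nhds ha)) (hw.1 i) (hz₀.1 i) h

theorem bregman_Hn_nonneg (hz₀ : z₀ ∈ S.domain) (hw : w ∈ S.domain) (i : ι) :
    0 ≤ bregman (S.Hn i) (z₀.1 i) (w.1 i) :=
  bregman_nonneg (S.strictConvexOn_Hn i).convexOn (hz₀.1 i) (hw.1 i) (differentiableAt_Hn hz₀ i)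

theorem bregman_He_nonneg (hz₀ : z₀ ∈ S.domain) (hw : w ∈ S.domain) (k : κ) :
    0 ≤ bregman (S.He k) (z₀.2 k) (w.2 k) :=
  bregman_nonneg (S.strictConvexOn_He k).convexOn (hz₀.2 k) (hw.2 k) (differentiableAt_He hz₀ k)

end Domain

section Fields

theorem continuous_edgeField [Fintype ι] (S : PHNetwork ι κ n m) (k : κ) :
    Continuous fun e => S.edgeField e k := by
  unfold edgeField
  fun_prop

theorem continuous_nodeField [Fintype κ] (S : PHNetwork ι κ n m) (i : ι) :
    Continuous fun e => S.nodeField e i := by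
  unfold nodeField
  fun_prop

theorem continuous_dissipation [Fintype ι] (S : PHNetwork ι κ n m) : Continuous S.dissipation := by
  unfold dissipation
  fun_prop

theorem dotProduct_A_mulVec_nonpos (S : PHNetwork ι κ n m) (i : ι) (v : Fin (n i) → ℝ) :
    v ⬝ᵥ (S.A i *ᵥ v) ≤ 0 := by
  rcases eq_or_ne v 0 with rfl | hv
  · rw [zero_dotProduct]
  · exact (S.A_neg i v hv).le

theorem dissipation_nonneg [Fintype ι] (S : PHNetwork ι κ n m) (v : ∀ i, Fin (n i) → ℝ) :
    0 ≤ S.dissipation v :=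
  neg_nonneg.2 (Finset.sum_nonpos fun i _ => S.dotProduct_A_mulVec_nonpos i (v i))

theorem eq_zero_of_dissipation_eq_zero [Fintype ι] {v : ∀ i, Fin (n i) → ℝ}
    (h : S.dissipation v = 0) : v = 0 := by
  funext i
  by_contra hv
  have hi := (Finset.sum_eq_zero_iff_of_nonpos fun j _ => S.dotProduct_A_mulVec_nonpos j (v j)).1
    (neg_eq_zero.1 h) i (Finset.mem_univ i)
  exact (S.A_neg i (v i) hv).ne hi

/-- Incremental power balance: the power exchanged between nodes and edges cancels because the
coupling enters `nodeField` and `edgeField` through a matrix and minus its transpose. -/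
theorem sum_dotProduct_field_sub [Fintype ι] [Fintype κ] (S : PHNetwork ι κ n m)
    (e e₀ : NetworkState κ n m) :
    ∑ i, (e.1 i - e₀.1 i) ⬝ᵥ (S.nodeField e i - S.nodeField e₀ i) +
      ∑ k, (e.2 k - e₀.2 k) ⬝ᵥ (S.edgeField e k - S.edgeField e₀ k) =
        -S.dissipation (e.1 - e₀.1) := by
  have hnode : ∀ i, (e.1 i - e₀.1 i) ⬝ᵥ (S.nodeField e i - S.nodeField e₀ i) =
      (e.1 i - e₀.1 i) ⬝ᵥ (S.A i *ᵥ (e.1 i - e₀.1 i)) -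
        ∑ k, S.B i k * (((S.G i)ᵀ *ᵥ (e.1 i - e₀.1 i)) ⬝ᵥ (e.2 k - e₀.2 k)) := by
    intro i
    have hsub : S.nodeField e i - S.nodeField e₀ i = S.A i *ᵥ (e.1 i - e₀.1 i) -
        S.G i *ᵥ (∑ k, S.B i k • (e.2 k - e₀.2 k)) := by
      simp only [nodeField, smul_sub, Finset.sum_sub_distrib, mulVec_sub]
      abel
    rw [hsub, dotProduct_sub, dotProduct_mulVec _ (S.G i), ← mulVec_transpose (S.G i),
      dotProduct_sum]
    simp only [dotProduct_smul, smul_eq_mul]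
  have hedge : ∀ k, (e.2 k - e₀.2 k) ⬝ᵥ (S.edgeField e k - S.edgeField e₀ k) =
      ∑ i, S.B i k * (((S.G i)ᵀ *ᵥ (e.1 i - e₀.1 i)) ⬝ᵥ (e.2 k - e₀.2 k)) := by
    intro k
    have hsub : S.edgeField e k - S.edgeField e₀ k =
        ∑ i, S.B i k • ((S.G i)ᵀ *ᵥ (e.1 i - e₀.1 i)) := by
      simp only [edgeField, mulVec_sub, smul_sub, Finset.sum_sub_distrib]
    rw [hsub, dotProduct_comm, sum_dotProduct]
    simp only [smul_dotProduct, smul_eq_mul]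
  simp only [hnode, hedge, Finset.sum_sub_distrib]
  rw [Finset.sum_comm (s := (Finset.univ : Finset κ)), sub_add_cancel, dissipation, neg_neg]
  rfl

theorem node_effort_eq_of_nodeField_eq_zero [Fintype κ] {e : NetworkState κ n m} {i : ι}
    (h : S.nodeField e i = 0) :
    e.1 i = (S.A i)⁻¹ *ᵥ (S.G i *ᵥ (∑ k, S.B i k • e.2 k) - S.G i *ᵥ S.d i) := by
  have hA : S.A i *ᵥ e.1 i = S.G i *ᵥ (∑ k, S.B i k • e.2 k) - S.G i *ᵥ S.d i := by
    rw [nodeField, sub_add] at h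
    exact sub_eq_zero.1 h
  have hdet := (isUnit_iff_isUnit_det _).1 (isUnit_of_dotProduct_mulVec_self_neg (S.A_neg i))
  rw [← hA, mulVec_mulVec, nonsing_inv_mul _ hdet, one_mulVec]

theorem isClosed_inter_constraintSet [Fintype κ] {C : Set (NetworkState κ n m)} (hC : IsClosed C)
    (hCΩ : C ⊆ S.domain) : IsClosed (C ∩ S.constraintSet) := by
  have hfields : IsClosed {e | ∀ i ∉ S.dynamic, S.nodeField e i = 0} := by
    simp only [ofPred_forall]
    exact isClosed_iInter fun i => isClosed_iInter fun _ =>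
      isClosed_eq (S.continuous_nodeField i) continuous_const
  exact (S.continuousOn_effort.mono hCΩ).preimage_isClosed_of_isClosed hC hfields

end Fields

section Lyapunov

variable [Fintype κ]

theorem lyapunov_self (S : PHNetwork ι κ n m) (z₀ : NetworkState κ n m) :
    S.lyapunov z₀ z₀ = 0 := by
  simp only [lyapunov, bregman_self, Finset.sum_const_zero, add_zero]

theorem lyapunov_nonneg (hz₀ : z₀ ∈ S.domain) (hw : w ∈ S.domain) : 0 ≤ S.lyapunov z₀ w :=
  add_nonneg (Finset.sum_nonneg fun i _ => bregman_Hn_nonneg hz₀ hw i)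
    (Finset.sum_nonneg fun k _ => bregman_He_nonneg hz₀ hw k)

/-- On the constraint set the edge efforts determine those of the algebraic nodes, so `lyapunov` is
positive definite there although it ignores the algebraic nodes. -/
theorem eq_of_lyapunov_eq_zero (hz₀ : z₀ ∈ S.domain) (hz₀c : z₀ ∈ S.constraintSet)
    (hw : w ∈ S.domain) (hwc : w ∈ S.constraintSet) (h : S.lyapunov z₀ w = 0) : w = z₀ := by
  obtain ⟨hnodes, hedges⟩ := (add_eq_zero_iff_of_nonneg
    (Finset.sum_nonneg fun i _ => bregman_Hn_nonneg hz₀ hw i)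
    (Finset.sum_nonneg fun k _ => bregman_He_nonneg hz₀ hw k)).1 h
  have hedge : w.2 = z₀.2 := by
    funext k
    by_contra hne
    exact (bregman_pos (S.strictConvexOn_He k) (hz₀.2 k) (hw.2 k)
      (differentiableAt_He hz₀ k) hne).ne' ((Finset.sum_eq_zero_iff_of_nonneg fun k _ =>
        bregman_He_nonneg hz₀ hw k).1 hedges k (Finset.mem_univ k))
  refine Prod.ext (funext fun i => ?_) hedge
  by_cases hi : i ∈ S.dynamic
  · by_contra hne
    exact (bregman_pos (S.strictConvexOn_Hn i) (hz₀.1 i) (hw.1 i)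
      (differentiableAt_Hn hz₀ i) hne).ne' ((Finset.sum_eq_zero_iff_of_nonneg fun i _ =>
        bregman_Hn_nonneg hz₀ hw i).1 hnodes i hi)
  · refine node_eq_of_effort_eq hz₀ hw ?_
    have heffort : (S.effort w).2 = (S.effort z₀).2 := by simp only [effort, hedge]
    rw [node_effort_eq_of_nodeField_eq_zero (hwc i hi),
      node_effort_eq_of_nodeField_eq_zero (hz₀c i hi), heffort]

theorem continuousOn_lyapunov (S : PHNetwork ι κ n m) (z₀ : NetworkState κ n m) :
    ContinuousOn (S.lyapunov z₀) S.domain :=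
  .add
    (continuousOn_finsetSum _ fun i _ =>
      (continuousOn_bregman (S.contDiffOn_Hn i).continuousOn _).comp (by fun_prop)
        fun _ hz => hz.1 i)
    (continuousOn_finsetSum _ fun k _ =>
      (continuousOn_bregman (S.contDiffOn_He k).continuousOn _).comp (by fun_prop)
        fun _ hz => hz.2 k)

variable [Fintype ι]

theorem IsEquilibrium.hasDerivWithinAt_lyapunov (h : S.IsEquilibrium z₀) (hz : S.IsSolution z)
    {t : ℝ} (ht : t ∈ Ici (0 : ℝ)) (hzt : z t ∈ S.domain) :
    HasDerivWithinAt (fun s => S.lyapunov z₀ (z s))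
      (-S.dissipation ((S.effort (z t)).1 - (S.effort z₀).1)) (Ici 0) t := by
  have hbalance := S.sum_dotProduct_field_sub (S.effort (z t)) (S.effort z₀)
  simp only [h.node, h.edge, sub_zero] at hbalance
  rw [← hbalance, ← Finset.sum_subset (Finset.subset_univ S.dynamic) fun i _ hi => by
    rw [hz.constraint ht i hi, dotProduct_zero]]
  refine .add (.fun_sum fun i hi => ?_) (.fun_sum fun k _ => ?_)
  · have hi' := hasDerivWithinAt_bregman (z₀.1 i) (differentiableAt_Hn hzt i) (hz.node t ht i hi)
    simpa only [effort, _root_.sub_apply, fderiv_apply_eq_grad_dotProduct,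
      ← sub_dotProduct] using hi'
  · have hk := hasDerivWithinAt_bregman (z₀.2 k) (differentiableAt_He hzt k) (hz.edge t ht k)
    simpa only [effort, _root_.sub_apply, fderiv_apply_eq_grad_dotProduct,
      ← sub_dotProduct] using hk

theorem IsEquilibrium.antitoneOn_lyapunov (h : S.IsEquilibrium z₀) (hz : S.IsSolution z)
    {D : Set ℝ} (hD : Convex ℝ D) (hD₀ : D ⊆ Ici 0) (hzD : MapsTo z D S.domain) :
    AntitoneOn (fun t => S.lyapunov z₀ (z t)) D := by
  have hderiv : ∀ t ∈ D, HasDerivWithinAt (fun s => S.lyapunov z₀ (z s))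
      (-S.dissipation ((S.effort (z t)).1 - (S.effort z₀).1)) D t := fun t ht =>
    (h.hasDerivWithinAt_lyapunov hz (hD₀ ht) (hzD ht)).mono hD₀
  exact antitoneOn_of_hasDerivWithinAt_nonpos hD (fun t ht => (hderiv t ht).continuousWithinAt)
    (fun t ht => (hderiv t (interior_subset ht)).mono interior_subset)
    fun _ _ => neg_nonpos.2 (S.dissipation_nonneg _)

theorem IsEquilibrium.stable (h : S.IsEquilibrium z₀)
    {U : Set (NetworkState κ n m)} (hU : U ∈ 𝓝 z₀) :
    ∃ U' ∈ 𝓝 z₀, ∀ z, S.IsSolution z → ∀ t₀ ≥ 0, z t₀ ∈ U' → ∀ t ≥ t₀, z t ∈ U := by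
  obtain ⟨r, hr, hball⟩ := Metric.nhds_basis_closedBall.mem_iff.1
    (inter_mem hU (S.isOpen_domain.mem_nhds h.mem_domain))
  have hdomain : Metric.closedBall z₀ r ⊆ S.domain := fun _ hw => (hball hw).2
  have hclosed := isClosed_inter_constraintSet (S := S) Metric.isClosed_sphere
    (Metric.sphere_subset_closedBall.trans hdomain)
  have hpos : ∀ w ∈ Metric.sphere z₀ r ∩ S.constraintSet, S.lyapunov z₀ z₀ < S.lyapunov z₀ w := by
    rintro w ⟨hw, hwc⟩
    have hwd := hdomain (Metric.sphere_subset_closedBall hw)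
    rw [lyapunov_self]
    exact (lyapunov_nonneg h.mem_domain hwd).lt_of_ne' fun h0 => Metric.ne_of_mem_sphere hw hr.ne'
      (eq_of_lyapunov_eq_zero h.mem_domain (fun i _ => h.node i) hwd hwc h0)
  obtain ⟨U', hU', htrap⟩ := exists_nhds_forall_mem_ball_of_lyapunov hr
    ((S.continuousOn_lyapunov z₀).mono hdomain) hclosed hpos
  refine ⟨U', hU', fun z hz t₀ ht₀ hz₀ t ht => (hball (Metric.ball_subset_closedBall ?_)).1⟩
  have hIci : Ici t₀ ⊆ Ici 0 := Ici_subset_Ici.2 ht₀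
  refine htrap z t₀ (hz.continuousOn.mono hIci) (hz.constraint.mono_left hIci)
    (fun T hT hzT => ?_) hz₀ t ht
  exact h.antitoneOn_lyapunov hz (convex_Icc t₀ T) (Icc_subset_Ici_self.trans hIci)
    (hzT.mono_right hdomain) (left_mem_Icc.2 hT) (right_mem_Icc.2 hT) hT

end Lyapunov

section Convergence

variable [Fintype ι] [Fintype κ] {K : Set (NetworkState κ n m)}

theorem IsSolution.uniformContinuousOn_edge_effort (hz : S.IsSolution z) (hK : IsCompact K)
    (hKΩ : K ⊆ S.domain) (hzK : MapsTo z (Ici 0) K) :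
    UniformContinuousOn (fun t => (S.effort (z t)).2) (Ici 0) := by
  refine uniformContinuousOn_pi.2 fun k => ?_
  obtain ⟨C, hC⟩ := hK.exists_bound_of_continuousOn
    ((S.continuous_edgeField k).comp_continuousOn (S.continuousOn_effort.mono hKΩ))
  have hcoord : Continuous fun w : NetworkState κ n m => w.2 k := by fun_prop
  have hη : UniformContinuousOn (fun t => (z t).2 k) (Ici 0) :=
    uniformContinuousOn_of_norm_hasDerivWithinAt_le (convex_Ici 0)
      (fun t ht => hz.edge t ht k) fun t ht => hC (z t) (hzK ht)
  exact uniformContinuousOn_comp_of_isCompact (hK.image hcoord)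
    ((continuousOn_grad (S.isOpen_Ωe k) (S.contDiffOn_He k)).mono
      (image_subset_iff.2 fun _ hw => (hKΩ hw).2 k)) hη fun t ht => mem_image_of_mem _ (hzK ht)

/-- Dynamic nodes have a bounded velocity; the efforts of algebraic nodes are affine functions of
those of the edges. -/
theorem IsSolution.uniformContinuousOn_node_effort (hz : S.IsSolution z) (hK : IsCompact K)
    (hKΩ : K ⊆ S.domain) (hzK : MapsTo z (Ici 0) K) :
    UniformContinuousOn (fun t => (S.effort (z t)).1) (Ici 0) := by
  refine uniformContinuousOn_pi.2 fun i => ?_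
  by_cases hi : i ∈ S.dynamic
  · obtain ⟨C, hC⟩ := hK.exists_bound_of_continuousOn
      ((S.continuous_nodeField i).comp_continuousOn (S.continuousOn_effort.mono hKΩ))
    have hcoord : Continuous fun w : NetworkState κ n m => w.1 i := by fun_prop
    have hx : UniformContinuousOn (fun t => (z t).1 i) (Ici 0) :=
      uniformContinuousOn_of_norm_hasDerivWithinAt_le (convex_Ici 0)
        (fun t ht => hz.node t ht i hi) fun t ht => hC (z t) (hzK ht)
    exact uniformContinuousOn_comp_of_isCompact (hK.image hcoord)
      ((continuousOn_grad (S.isOpen_Ωn i) (S.contDiffOn_Hn i)).mono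
        (image_subset_iff.2 fun _ hw => (hKΩ hw).1 i)) hx fun t ht => mem_image_of_mem _ (hzK ht)
  · have hcont : ContinuousOn (fun w => (S.effort w).2) K :=
      continuous_snd.comp_continuousOn (S.continuousOn_effort.mono hKΩ)
    have haffine : Continuous fun e : κ → Fin m → ℝ =>
        (S.A i)⁻¹ *ᵥ (S.G i *ᵥ (∑ k, S.B i k • e k) - S.G i *ᵥ S.d i) := by fun_prop
    refine (uniformContinuousOn_comp_of_isCompact (hK.image_of_continuousOn hcont)
      haffine.continuousOn (hz.uniformContinuousOn_edge_effort hK hKΩ hzK)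
      fun t ht => mem_image_of_mem _ (hzK ht)).congr fun t ht => ?_
    exact (node_effort_eq_of_nodeField_eq_zero (hz.constraint ht i hi)).symm

theorem IsSolution.uniformContinuousOn_comp_effort {X : Type*} [UniformSpace X]
    {Φ : NetworkState κ n m → X} (hz : S.IsSolution z) (hK : IsCompact K) (hKΩ : K ⊆ S.domain)
    (hzK : MapsTo z (Ici 0) K) (hΦ : Continuous Φ) :
    UniformContinuousOn (fun t => Φ (S.effort (z t))) (Ici 0) := by
  have heffort : UniformContinuousOn (fun t => S.effort (z t)) (Ici 0) := by
    rw [uniformContinuousOn_iff_restrict]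
    exact (uniformContinuousOn_iff_restrict.1
      (hz.uniformContinuousOn_node_effort hK hKΩ hzK)).prodMk
        (uniformContinuousOn_iff_restrict.1 (hz.uniformContinuousOn_edge_effort hK hKΩ hzK))
  exact uniformContinuousOn_comp_of_isCompact
    (hK.image_of_continuousOn (S.continuousOn_effort.mono hKΩ)) hΦ.continuousOn heffort
    fun t ht => mem_image_of_mem _ (hzK ht)

theorem IsEquilibrium.tendsto_dissipation (h : S.IsEquilibrium z₀) (hz : S.IsSolution z)
    (hK : IsCompact K) (hKΩ : K ⊆ S.domain) (hzK : MapsTo z (Ici 0) K) :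
    Tendsto (fun t => S.dissipation ((S.effort (z t)).1 - (S.effort z₀).1)) atTop (𝓝 0) := by
  have hzΩ : MapsTo z (Ici 0) S.domain := hzK.mono_right hKΩ
  obtain ⟨l, hl⟩ := exists_tendsto_atTop_of_antitoneOn_Ici
    (h.antitoneOn_lyapunov hz (convex_Ici 0) Subset.rfl hzΩ)
    ⟨0, fun t ht => lyapunov_nonneg h.mem_domain (hzΩ ht)⟩
  have hcont : Continuous fun e : NetworkState κ n m =>
      -S.dissipation (e.1 - (S.effort z₀).1) :=
    (S.continuous_dissipation.comp (by fun_prop)).neg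
  simpa only [neg_neg, neg_zero] using (tendsto_zero_of_hasDerivWithinAt_of_uniformContinuousOn
    (fun t ht => h.hasDerivWithinAt_lyapunov hz ht (hzΩ ht))
    (hz.uniformContinuousOn_comp_effort hK hKΩ hzK hcont) hl).neg

theorem IsEquilibrium.tendsto_node (h : S.IsEquilibrium z₀) (hz : S.IsSolution z)
    (hK : IsCompact K) (hKΩ : K ⊆ S.domain) (hzK : MapsTo z (Ici 0) K) :
    Tendsto (fun t => (z t).1) atTop (𝓝 z₀.1) := by
  have hdomain : MapsTo (fun x => (x, z₀.2)) (Prod.fst '' K) S.domain := by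
    rintro _ ⟨w, hw, rfl⟩
    exact ⟨(hKΩ hw).1, h.mem_domain.2⟩
  have hcont : ContinuousOn
      (fun x => S.dissipation ((S.effort (x, z₀.2)).1 - (S.effort z₀).1)) (Prod.fst '' K) :=
    S.continuous_dissipation.comp_continuousOn
      ((S.continuousOn_effort.comp (by fun_prop) hdomain).fst.sub continuousOn_const)
  have hdissipation := h.tendsto_dissipation hz hK hKΩ hzK
  refine tendsto_nhds_of_tendsto_comp_of_isCompact (hK.image continuous_fst) ?_ hcont
    hdissipation fun x hx hx₀ => funext fun i => ?_
  · filter_upwards [Ici_mem_atTop 0] with t ht using mem_image_of_mem _ (hzK ht)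
  · exact node_eq_of_effort_eq h.mem_domain (hdomain hx)
      (congrFun (sub_eq_zero.1 (eq_zero_of_dissipation_eq_zero hx₀)) i)

theorem IsEquilibrium.tendsto_nodeField (h : S.IsEquilibrium z₀) (hz : S.IsSolution z)
    (hK : IsCompact K) (hKΩ : K ⊆ S.domain) (hzK : MapsTo z (Ici 0) K) (i : ι) :
    Tendsto (fun t => S.nodeField (S.effort (z t)) i) atTop (𝓝 0) := by
  by_cases hi : i ∈ S.dynamic
  · have hxi := (tendsto_pi_nhds.1 (h.tendsto_node hz hK hKΩ hzK)) i
    exact tendsto_zero_of_hasDerivWithinAt_of_uniformContinuousOn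
      (fun t ht => hz.node t ht i hi)
      (hz.uniformContinuousOn_comp_effort hK hKΩ hzK (S.continuous_nodeField i)) hxi
  · refine tendsto_const_nhds.congr' ?_
    filter_upwards [Ici_mem_atTop 0] with t ht using (hz.constraint ht i hi).symm

theorem IsEquilibrium.of_mapClusterPt (h : S.IsEquilibrium z₀) (hz : S.IsSolution z)
    (hK : IsCompact K) (hKΩ : K ⊆ S.domain) (hzK : MapsTo z (Ici 0) K)
    (hwK : w ∈ K) (hw : MapClusterPt w atTop z) : S.IsEquilibrium w := by
  obtain ⟨𝒰, h𝒰, hzw⟩ := mapClusterPt_iff_ultrafilter.1 hw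
  have hnode : w.1 = z₀.1 :=
    tendsto_nhds_unique hzw.fst_nhds ((h.tendsto_node hz hK hKΩ hzK).mono_left h𝒰)
  have heffort : ContinuousAt S.effort w :=
    S.continuousOn_effort.continuousAt (S.isOpen_domain.mem_nhds (hKΩ hwK))
  refine ⟨hKΩ hwK, fun k => ?_, fun i => ?_⟩
  · simpa only [edgeField, effort, hnode] using h.edge k
  · exact tendsto_nhds_unique
      (((S.continuous_nodeField i).continuousAt.comp heffort).tendsto.comp hzw)
      ((h.tendsto_nodeField hz hK hKΩ hzK i).mono_left h𝒰)

/-- A cluster point is itself an equilibrium, and its stability keeps the solution close once it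
has come close. -/
theorem IsEquilibrium.exists_tendsto (h : S.IsEquilibrium z₀) (hz : S.IsSolution z)
    (hK : IsCompact K) (hKΩ : K ⊆ S.domain) (hzK : MapsTo z (Ici 0) K) :
    ∃ w, S.IsEquilibrium w ∧ Tendsto z atTop (𝓝 w) := by
  have hev : ∀ᶠ t in atTop, z t ∈ K := by
    filter_upwards [Ici_mem_atTop 0] with t ht using hzK ht
  obtain ⟨w, hwK, hw⟩ := hK.exists_mapClusterPt_of_frequently hev.frequently
  have hequilibrium := h.of_mapClusterPt hz hK hKΩ hzK hwK hw
  refine ⟨w, hequilibrium, fun U hU => ?_⟩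
  obtain ⟨U', hU', hstable⟩ := hequilibrium.stable hU
  obtain ⟨t₀, hzt₀, ht₀⟩ :=
    ((hw.frequently hU').and_eventually (eventually_ge_atTop 0)).exists
  exact (eventually_ge_atTop t₀).mono fun t ht => hstable z hz t₀ ht₀ hzt₀ t ht

end Convergence

end PHNetwork

theorem output_agreement_attractivity_general {ι κ : Type*} [Fintype ι] [Fintype κ] {n : ι → ℕ}
    {m : ℕ} (S : PHNetwork ι κ n m)
    (hB : LinearMap.ker S.Bᵀ.mulVecLin ≤ Submodule.span ℝ {fun _ => 1}) {z₀ : NetworkState κ n m}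
    (h : S.IsEquilibrium z₀) :
    ∃ U, IsOpen U ∧ z₀ ∈ U ∧ ∀ z, S.IsSolution z → z 0 ∈ U →
      MapsTo z (Ici 0) S.domain ∧ ∃ w, S.IsEquilibrium w ∧ Tendsto z atTop (𝓝 w) ∧
        ∀ i j, (S.G i)ᵀ *ᵥ grad (S.Hn i) (w.1 i) = (S.G j)ᵀ *ᵥ grad (S.Hn j) (w.1 j) := by
  obtain ⟨r, hr, hball⟩ := Metric.nhds_basis_closedBall.mem_iff.1
    (S.isOpen_domain.mem_nhds h.mem_domain)
  obtain ⟨U', hU', hstable⟩ := h.stable (Metric.closedBall_mem_nhds z₀ hr)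
  obtain ⟨U, hUU', hU, hz₀U⟩ := mem_nhds_iff.1 hU'
  refine ⟨U, hU, hz₀U, fun z hz hz0 => ?_⟩
  have hzK : MapsTo z (Ici 0) (Metric.closedBall z₀ r) := hstable z hz 0 le_rfl (hUU' hz0)
  obtain ⟨w, hw, hlim⟩ := h.exists_tendsto hz (isCompact_closedBall z₀ r) hball hzK
  exact ⟨hzK.mono_right hball, w, hw, hlim, eq_of_ker_transpose_le_span_one hB hw.edge⟩

/-- Theorem 1: any equilibrium `(x̄, η̄)` of the heterogeneous
differential-algebraic network is locally attractive: there is an open set `U`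
of initial conditions around it such that every solution starting in `U`
remains in `(Ω_n)^N × (Ω_e)^M` and converges to an equilibrium of the network,
at which output agreement `G_iᵀ∇H_{n,i} = G_jᵀ∇H_{n,j}` holds. -/
theorem output_agreement_attractivity
    {n m N M : ℕ} (hn : 0 < n) (hm : 0 < m) (hN : 0 < N) (hM : 0 < M)
    (B : Matrix (Fin N) (Fin M) ℝ)
    (hB1 : ∀ k, ∑ i, B i k = 0)
    (hBker : LinearMap.ker (Matrix.mulVecLin Bᵀ) =
      Submodule.span ℝ {(fun _ => (1 : ℝ) : Fin N → ℝ)})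
    (J R : Fin N → Matrix (Fin n) (Fin n) ℝ)
    (hJ : ∀ i, (J i)ᵀ = -(J i)) (hR : ∀ i, (R i).PosDef)
    (G : Fin N → Matrix (Fin n) (Fin m) ℝ)
    (d : Fin N → Fin m → ℝ)
    (Ωn : Set (Fin n → ℝ)) (hΩno : IsOpen Ωn) (hΩnc : Convex ℝ Ωn)
    (Ωe : Set (Fin m → ℝ)) (hΩeo : IsOpen Ωe) (hΩec : Convex ℝ Ωe)
    (Hn : Fin N → (Fin n → ℝ) → ℝ)
    (hHnC : ∀ i, ContDiffOn ℝ 1 (Hn i) Ωn)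
    (hHnconv : ∀ i, StrictConvexOn ℝ Ωn (Hn i))
    (He : Fin M → (Fin m → ℝ) → ℝ)
    (hHeC : ∀ k, ContDiffOn ℝ 1 (He k) Ωe)
    (hHeconv : ∀ k, StrictConvexOn ℝ Ωe (He k))
    (I1 I2 : Finset (Fin N))
    (hpart : I1 ∪ I2 = Finset.univ) (hdisj : Disjoint I1 I2)
    (xbar : Fin N → Fin n → ℝ) (ηbar : Fin M → Fin m → ℝ)
    (hxbar : ∀ i, xbar i ∈ Ωn) (hηbar : ∀ k, ηbar k ∈ Ωe)
    (heq1 : ∀ k, ∑ i, B i k • ((G i)ᵀ *ᵥ grad (Hn i) (xbar i)) = 0)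
    (heq2 : ∀ i, (0 : Fin n → ℝ) =
      (J i - R i) *ᵥ grad (Hn i) (xbar i)
        - (G i) *ᵥ (∑ k, B i k • grad (He k) (ηbar k)) + (G i) *ᵥ d i) :
    ∃ U : Set ((Fin N → Fin n → ℝ) × (Fin M → Fin m → ℝ)),
      IsOpen U ∧ (xbar, ηbar) ∈ U ∧
      ∀ (x : ℝ → Fin N → Fin n → ℝ) (η : ℝ → Fin M → Fin m → ℝ),
        -- (x, η) is a solution of the network on [0, ∞):
        ContinuousOn (fun t => (x t, η t)) (Ici 0) →
        (∀ t ∈ Ici (0 : ℝ), ∀ k,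
          HasDerivWithinAt (fun s => η s k)
            (∑ i, B i k • ((G i)ᵀ *ᵥ grad (Hn i) (x t i))) (Ici 0) t) →
        (∀ t ∈ Ici (0 : ℝ), ∀ i ∈ I1,
          HasDerivWithinAt (fun s => x s i)
            ((J i - R i) *ᵥ grad (Hn i) (x t i)
              - (G i) *ᵥ (∑ k, B i k • grad (He k) (η t k)) + (G i) *ᵥ d i)
            (Ici 0) t) →
        (∀ t ∈ Ici (0 : ℝ), ∀ i ∈ I2,
          (0 : Fin n → ℝ) = (J i - R i) *ᵥ grad (Hn i) (x t i)
            - (G i) *ᵥ (∑ k, B i k • grad (He k) (η t k)) + (G i) *ᵥ d i) →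
        -- starting in U:
        (x 0, η 0) ∈ U →
        -- it remains in the region and converges to an equilibrium with agreement:
        (∀ t ∈ Ici (0 : ℝ), (∀ i, x t i ∈ Ωn) ∧ (∀ k, η t k ∈ Ωe)) ∧
        ∃ (xt : Fin N → Fin n → ℝ) (ηt : Fin M → Fin m → ℝ),
          (∀ i, xt i ∈ Ωn) ∧ (∀ k, ηt k ∈ Ωe) ∧
          (∀ k, ∑ i, B i k • ((G i)ᵀ *ᵥ grad (Hn i) (xt i)) = 0) ∧
          (∀ i, (0 : Fin n → ℝ) = (J i - R i) *ᵥ grad (Hn i) (xt i)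
            - (G i) *ᵥ (∑ k, B i k • grad (He k) (ηt k)) + (G i) *ᵥ d i) ∧
          Tendsto x atTop (𝓝 xt) ∧ Tendsto η atTop (𝓝 ηt) ∧
          ∀ i j, (G i)ᵀ *ᵥ grad (Hn i) (xt i) = (G j)ᵀ *ᵥ grad (Hn j) (xt j) := by
  let S : PHNetwork (Fin N) (Fin M) (fun _ => n) m :=
    { B, G, d, Hn, He
      A := fun i => J i - R i
      A_neg := fun i _ hv => dotProduct_sub_mulVec_self_neg (hJ i) (hR i) hv
      Ωn := fun _ => Ωn
      isOpen_Ωn := fun _ => hΩno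
      Ωe := fun _ => Ωe
      isOpen_Ωe := fun _ => hΩeo
      contDiffOn_Hn := hHnC
      strictConvexOn_Hn := hHnconv
      contDiffOn_He := hHeC
      strictConvexOn_He := hHeconv
      dynamic := I1 }
  have heq : S.IsEquilibrium (xbar, ηbar) := ⟨⟨hxbar, hηbar⟩, heq1, fun i => (heq2 i).symm⟩
  obtain ⟨U, hU, hmem, hsol⟩ := output_agreement_attractivity_general S hBker.le heq
  refine ⟨U, hU, hmem, fun x η hcont hedge hnode hconstraint hinit => ?_⟩
  have hI2 : ∀ i ∉ I1, i ∈ I2 := fun i hi =>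
    (Finset.mem_union.1 (hpart ▸ Finset.mem_univ i)).resolve_left hi
  obtain ⟨hdomain, ⟨xt, ηt⟩, ht, hlim, hagree⟩ := hsol (fun t => (x t, η t))
    ⟨hcont, hedge, hnode, fun t ht i hi => (hconstraint t ht i (hI2 i hi)).symm⟩ hinit
  exact ⟨hdomain, xt, ηt, ht.mem_domain.1, ht.mem_domain.2, ht.edge, fun i => (ht.node i).symm,
    hlim.fst_nhds, hlim.snd_nhds, hagree⟩
end
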